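/- Let G and G' be bow-free acyclic path diagrams on the same finite vertex type V. If G and G' have the same skeleton and the same collider triples, then they are algebraically equivalent: A(G) = A(G'). (Theorem 6 of the paper.) -/

import Mathlib

open Matrix

structure MixedGraph (V : Type*) where
  D : V → V → Prop
  B : V → V → Prop
  symm : ∀ v w, B v w → B w v
  irrefl : ∀ v, ¬ B v v

namespace MixedGraph

variable {V : Type*}

/-- The graph is acyclic: no directed cycles. -/
def Acyclic (G : MixedGraph V) : Prop := ∀ v, ¬ Relation.TransGen G.D v v

/-- The graph is simple: for distinct `v, w`, at most one of
`D v w`, `D w v`, `B v w` holds. -/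
def Simple (G : MixedGraph V) : Prop :=
  ∀ v w, v ≠ w →
    ¬ (G.D v w ∧ G.D w v) ∧ ¬ (G.D v w ∧ G.B v w) ∧ ¬ (G.D w v ∧ G.B v w)

/-- A bow-free acyclic path diagram: a simple acyclic mixed graph. -/
def IsBAP (G : MixedGraph V) : Prop := G.Acyclic ∧ G.Simple

/-- `Λ` is compatible with `G`. -/
def LamCompat (G : MixedGraph V) (Λ : Matrix V V ℝ) : Prop :=
  ∀ v w, ¬ G.D v w → Λ v w = 0

/-- `Ω` is compatible with `G`. -/
def OmCompat [Fintype V] (G : MixedGraph V) (Ω : Matrix V V ℝ) : Prop :=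
  Ω.PosDef ∧ ∀ v w, v ≠ w → ¬ G.B v w → ¬ G.B w v → Ω v w = 0

/-- The model `M(G)` of a mixed graph. -/
def model [Fintype V] [DecidableEq V] (G : MixedGraph V) : Set (Matrix V V ℝ) :=
  {S | ∃ Λ Ω : Matrix V V ℝ, G.LamCompat Λ ∧ G.OmCompat Ω ∧
    S = ((1 - Λ)⁻¹)ᵀ * Ω * (1 - Λ)⁻¹}

/-- The algebraic model `A(G)`: the real Zariski closure of `M(G)`. -/
def algModel [Fintype V] [DecidableEq V] (G : MixedGraph V) : Set (Matrix V V ℝ) :=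
  {S | ∀ p : MvPolynomial (V × V) ℝ,
    (∀ T ∈ G.model, MvPolynomial.eval (fun e => T e.1 e.2) p = 0) →
    MvPolynomial.eval (fun e => S e.1 e.2) p = 0}

/-- The skeleton (adjacency relation) of `G`. -/
def adj (G : MixedGraph V) (v w : V) : Prop :=
  v ≠ w ∧ (G.D v w ∨ G.D w v ∨ G.B v w)

/-- A collider triple of `G`. -/
def ColliderTriple (G : MixedGraph V) (u v w : V) : Prop :=
  u ≠ v ∧ v ≠ w ∧ u ≠ w ∧ (G.D u v ∨ G.B u v) ∧ (G.D w v ∨ G.B w v)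

/-- A v-structure of `G`. -/
def VStructure (G : MixedGraph V) (u v w : V) : Prop :=
  G.ColliderTriple u v w ∧ ¬ G.adj u w

end MixedGraph

namespace List

variable {α R : Type*} [CommSemiring R]

/-- The product of the weights `a x y` over consecutive entries `x, y` of a list. -/
def walkWeight (a : α → α → R) : List α → R
  | [] => 1
  | [_] => 1
  | x :: y :: l => a x y * walkWeight a (y :: l)

theorem walkWeight_cons_of_head? (a : α → α → R) {l : List α} {x y : α}
    (h : l.head? = some y) : walkWeight a (x :: l) = a x y * walkWeight a l := by
  cases l with
  | nil => simp at h
  | cons z l =>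
    obtain rfl : z = y := by simpa using h
    rfl

theorem walkWeight_append (a : α → α → R) (l₁ l₂ : List α) (x : α) :
    walkWeight a (l₁ ++ x :: l₂) = walkWeight a (l₁ ++ [x]) * walkWeight a (x :: l₂) := by
  induction l₁ with
  | nil => simp [walkWeight]
  | cons y l₁ ih =>
    cases l₁ with
    | nil => simp [walkWeight]
    | cons z l₁ =>
      simp only [cons_append, walkWeight] at ih ⊢
      rw [ih, mul_assoc]

theorem walkWeight_reverse {a : α → α → R} (ha : ∀ x y, a x y = a y x) (l : List α) :
    walkWeight a l.reverse = walkWeight a l := by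
  induction l with
  | nil => rfl
  | cons x l ih =>
    cases l with
    | nil => rfl
    | cons y l =>
      rw [reverse_cons, reverse_cons, append_assoc, singleton_append, walkWeight_append,
        ← reverse_cons, ih]
      simp [walkWeight, ha y x, mul_comm]

end List

namespace MixedGraph

open Relation

section Treks

open List

variable {V : Type*} {G : MixedGraph V}

/-- Simple paths, given as vertex lists, that contain no collider. -/
def IsTrek (G : MixedGraph V) (l : List V) : Prop :=
  l.Nodup ∧ l.IsChain G.adj ∧ ∀ x y z, [x, y, z] <:+: l → ¬ G.ColliderTriple x y z

theorem adj.symm {v w : V} (h : G.adj v w) : G.adj w v := by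
  obtain ⟨hne, h | h | h⟩ := h
  · exact ⟨hne.symm, .inr (.inl h)⟩
  · exact ⟨hne.symm, .inl h⟩
  · exact ⟨hne.symm, .inr (.inr (G.symm _ _ h))⟩

theorem ColliderTriple.symm {u v w : V} (h : G.ColliderTriple u v w) :
    G.ColliderTriple w v u := by
  obtain ⟨h₁, h₂, h₃, h₄, h₅⟩ := h
  exact ⟨h₂.symm, h₁.symm, h₃.symm, h₅, h₄⟩

theorem IsTrek.reverse {l : List V} (h : G.IsTrek l) : G.IsTrek l.reverse := by
  refine ⟨nodup_reverse.2 h.1, isChain_reverse.2 (h.2.1.imp fun _ _ hxy => hxy.symm), ?_⟩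
  intro x y z hl hc
  refine h.2.2 z y x ?_ hc.symm
  rw [← reverse_infix]
  simpa using hl

theorem IsTrek.tail {x : V} {l : List V} (h : G.IsTrek (x :: l)) : G.IsTrek l :=
  ⟨h.1.of_cons, h.2.1.tail, fun _ _ _ hl => h.2.2 _ _ _ (infix_cons hl)⟩

theorem isTrek_singleton (x : V) : G.IsTrek [x] := by
  refine ⟨nodup_singleton x, .singleton x, fun u v w h => ?_⟩
  have := h.length_le
  simp at this

theorem isTrek_pair {x y : V} (h : G.adj x y) : G.IsTrek [x, y] := by
  refine ⟨by simp [h.1], by simp [h], fun u v w h => ?_⟩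
  have := h.length_le
  simp at this

theorem isTrek_cons_cons_cons {x y z : V} {l : List V} (hx : x ∉ y :: z :: l) (hxy : G.adj x y)
    (hc : ¬ G.ColliderTriple x y z) (h : G.IsTrek (y :: z :: l)) :
    G.IsTrek (x :: y :: z :: l) := by
  refine ⟨nodup_cons.2 ⟨hx, h.1⟩, isChain_cons_cons.2 ⟨hxy, h.2.1⟩, fun u v w huvw => ?_⟩
  rw [infix_cons_iff] at huvw
  rcases huvw with huvw | huvw
  · simp only [cons_prefix_cons, nil_prefix, and_true] at huvw
    obtain ⟨rfl, rfl, rfl⟩ := huvw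
    exact hc
  · exact h.2.2 _ _ _ huvw

theorem IsTrek.isChain_D {x y : V} {l : List V} (h : G.IsTrek (x :: y :: l))
    (hxy : G.D x y ∨ G.B x y) : (y :: l).IsChain G.D := by
  induction l generalizing x y with
  | nil => exact .singleton y
  | cons z l ih =>
    have hc := h.2.2 x y z ⟨[], l, by simp⟩
    have hn := h.1
    have hadj := (isChain_cons_cons.1 h.tail.2.1).1
    have hyz : G.D y z := by
      simp only [nodup_cons, mem_cons, not_or] at hn
      obtain ⟨hne, hD | hD | hB⟩ := hadj
      · exact hD
      · exact absurd ⟨hn.1.1, hne, hn.1.2.1, hxy, .inl hD⟩ hc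
      · exact absurd ⟨hn.1.1, hne, hn.1.2.1, hxy, .inr (G.symm _ _ hB)⟩ hc
    exact isChain_cons_cons.2 ⟨hyz, ih h.tail (.inl hyz)⟩

theorem reflTransGen_getLast?_of_isChain {r : V → V → Prop} {l : List V} {v x : V}
    (h : l.IsChain r) (hv : l.getLast? = some v) (hx : x ∈ l) : ReflTransGen r x v := by
  induction l generalizing x with
  | nil => simp at hx
  | cons y l ih =>
    cases l with
    | nil =>
      simp only [getLast?_singleton, Option.some.injEq, mem_singleton] at hv hx
      rw [hx, hv]
    | cons z l =>
      rw [getLast?_cons_cons] at hv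
      rcases mem_cons.1 hx with rfl | hx
      · exact .head (isChain_cons_cons.1 h).1 (ih h.tail hv mem_cons_self)
      · exact ih h.tail hv hx

theorem nodup_of_isChain_D (hG : G.Acyclic) {l : List V} (h : l.IsChain G.D) : l.Nodup := by
  have h' : l.IsChain (TransGen G.D) := h.imp fun _ _ => .single
  refine h'.pairwise.imp fun {x y} hxy => ?_
  rintro rfl
  exact hG x hxy

/-- Every vertex of a trek is an ancestor of one of its ends. -/
theorem IsTrek.ancestor {l : List V} {u v x : V} (h : G.IsTrek l) (hu : l.head? = some u)
    (hv : l.getLast? = some v) (hx : x ∈ l) :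
    ReflTransGen G.D x u ∨ ReflTransGen G.D x v := by
  induction l generalizing u with
  | nil => simp at hx
  | cons y l ih =>
    obtain rfl : y = u := by simpa using hu
    rcases mem_cons.1 hx with rfl | hx
    · exact .inl .refl
    cases l with
    | nil => simp at hx
    | cons z l =>
      rw [getLast?_cons_cons] at hv
      obtain ⟨-, hD | hD | hB⟩ := (isChain_cons_cons.1 h.2.1).1
      · exact .inr (reflTransGen_getLast?_of_isChain (h.isChain_D (.inl hD)) hv hx)
      · exact (ih h.tail rfl hv hx).imp_left fun hxz => hxz.tail hD
      · exact .inr (reflTransGen_getLast?_of_isChain (h.isChain_D (.inr hB)) hv hx)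

theorem Acyclic.ne_of_D (hG : G.Acyclic) {x y : V} (h : G.D x y) : x ≠ y := by
  rintro rfl
  exact hG x (.single h)

theorem not_isInfix_collider_of_isChain_D (hG : G.IsBAP) {l : List V} (h : l.IsChain G.D)
    {x y z : V} (hl : [x, y, z] <:+: l) : ¬ G.ColliderTriple x y z := by
  have hxyz := h.infix hl
  simp only [isChain_cons_cons] at hxyz
  rintro ⟨-, hne, -, -, hzy⟩
  have := hG.2 y z hne
  rcases hzy with hzy | hzy
  · exact this.1 ⟨hxyz.2.1, hzy⟩
  · exact this.2.1 ⟨hxyz.2.1, G.symm _ _ hzy⟩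

theorem isTrek_of_isChain_D (hG : G.IsBAP) {l : List V} (h : l.IsChain G.D) : G.IsTrek l :=
  ⟨nodup_of_isChain_D hG.1 h, h.imp fun _ _ hxy => ⟨hG.1.ne_of_D hxy, .inl hxy⟩,
    fun _ _ _ => not_isInfix_collider_of_isChain_D hG h⟩

theorem IsTrek.cons_of_D (hG : G.IsBAP) {l : List V} {u v w : V} (h : G.IsTrek l)
    (hu : l.head? = some u) (hv : l.getLast? = some v) (hwv : ¬ ReflTransGen G.D w v)
    (huw : G.D u w) : G.IsTrek (w :: l) := by
  have hw : w ∉ l := fun hw => (h.ancestor hu hv hw).elim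
    (fun hwu => hG.1 w (.tail' hwu huw)) hwv
  have hne := hG.1.ne_of_D huw
  have hadj : G.adj w u := ⟨hne.symm, .inr (.inl huw)⟩
  match l, hu with
  | [x], hu =>
    obtain rfl : x = u := by simpa using hu
    exact isTrek_pair hadj
  | x :: z :: l, hu =>
    obtain rfl : x = u := by simpa using hu
    refine isTrek_cons_cons_cons hw hadj ?_ h
    rintro ⟨-, -, -, hwx | hwx, -⟩
    · exact (hG.2 x w hne).1 ⟨huw, hwx⟩
    · exact (hG.2 x w hne).2.1 ⟨huw, G.symm _ _ hwx⟩

theorem isTrek_cons_of_B (hG : G.IsBAP) {l : List V} {u v w : V} (h : l.IsChain G.D)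
    (hu : l.head? = some u) (hv : l.getLast? = some v) (hwv : ¬ ReflTransGen G.D w v)
    (huw : G.B u w) : G.IsTrek (w :: l) := by
  have hw : w ∉ l := fun hw => hwv (reflTransGen_getLast?_of_isChain h hv hw)
  have hne : u ≠ w := by
    rintro rfl
    exact G.irrefl _ huw
  have hadj : G.adj w u := ⟨hne.symm, .inr (.inr (G.symm _ _ huw))⟩
  match l, hu with
  | [x], hu =>
    obtain rfl : x = u := by simpa using hu
    exact isTrek_pair hadj
  | x :: z :: l, hu =>
    obtain rfl : x = u := by simpa using hu
    refine isTrek_cons_cons_cons hw hadj ?_ (isTrek_of_isChain_D hG h)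
    have hxz := (isChain_cons_cons.1 h).1
    rintro ⟨-, hne, -, -, hzx | hzx⟩
    · exact (hG.2 x z hne).1 ⟨hxz, hzx⟩
    · exact (hG.2 x z hne).2.1 ⟨hxz, G.symm _ _ hzx⟩

theorem eq_singleton_of_nodup {l : List V} {v : V} (h : l.Nodup) (hh : l.head? = some v)
    (hl : l.getLast? = some v) : l = [v] := by
  match l with
  | [] => simp at hh
  | [x] => simpa using hh
  | x :: y :: l =>
    obtain rfl : x = v := by simpa using hh
    rw [getLast?_cons_cons] at hl
    exact absurd (mem_of_getLast? hl) (nodup_cons.1 h).1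

theorem not_reflTransGen_or (hG : G.Acyclic) {v w : V} (h : w ≠ v) :
    ¬ ReflTransGen G.D w v ∨ ¬ ReflTransGen G.D v w := by
  by_contra! hc
  rcases reflTransGen_iff_eq_or_transGen.1 hc.1 with h' | h'
  · exact h h'.symm
  · exact hG w (h'.trans_left hc.2)

end Treks

section EdgeWeights

variable {V : Type*} {G : MixedGraph V}

open Classical in
/-- The weights of the directed edges. -/
noncomputable def dirPart (G : MixedGraph V) (a : V → V → ℝ) : Matrix V V ℝ :=
  of fun v w => if G.D v w then a v w else 0

open Classical in
/-- The weights of the bidirected edges. -/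
noncomputable def bidirPart (G : MixedGraph V) (a : V → V → ℝ) : Matrix V V ℝ :=
  of fun v w => if G.B v w then a v w else 0

theorem LamCompat.dirPart_eq {Λ : Matrix V V ℝ} (h : G.LamCompat Λ) : G.dirPart Λ = Λ := by
  ext v w
  by_cases hD : G.D v w
  · simp [dirPart, hD]
  · simp [dirPart, hD, h v w hD]

end EdgeWeights

section Sums

open List

variable {V : Type*} [Fintype V] {G : MixedGraph V} {a : V → V → ℝ}

theorem finite_setOf_nodup : {l : List V | l.Nodup}.Finite := by
  classical
  exact @Set.toFinite _ _ (inferInstanceAs (Finite {l : List V // l.Nodup}))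

open Classical in
/-- The treks from `w` to `v`. -/
noncomputable def treks (G : MixedGraph V) (w v : V) : Finset (List V) :=
  finite_setOf_nodup.toFinset.filter fun l =>
    G.IsTrek l ∧ l.head? = some w ∧ l.getLast? = some v

open Classical in
/-- The repetition-free directed paths from `w` to `v`. -/
noncomputable def dirPaths (G : MixedGraph V) (w v : V) : Finset (List V) :=
  finite_setOf_nodup.toFinset.filter fun l =>
    l.IsChain G.D ∧ l.head? = some w ∧ l.getLast? = some v

theorem mem_treks {w v : V} {l : List V} :
    l ∈ G.treks w v ↔ G.IsTrek l ∧ l.head? = some w ∧ l.getLast? = some v := by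
  simp only [treks, Finset.mem_filter, Set.Finite.mem_toFinset, Set.mem_ofPred_eq,
    and_iff_right_iff_imp]
  exact fun h => h.1.1

theorem mem_dirPaths (hG : G.Acyclic) {w v : V} {l : List V} :
    l ∈ G.dirPaths w v ↔ l.IsChain G.D ∧ l.head? = some w ∧ l.getLast? = some v := by
  simp only [dirPaths, Finset.mem_filter, Set.Finite.mem_toFinset, Set.mem_ofPred_eq,
    and_iff_right_iff_imp]
  exact fun h => nodup_of_isChain_D hG h.1

/-- The sum of the weights of all treks between two vertices. -/
noncomputable def trekSum (G : MixedGraph V) (a : V → V → ℝ) : Matrix V V ℝ :=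
  of fun w v => ∑ l ∈ G.treks w v, walkWeight a l

/-- The sum of the weights of all directed paths from one vertex to another. -/
noncomputable def dirSum (G : MixedGraph V) (a : V → V → ℝ) : Matrix V V ℝ :=
  of fun w v => ∑ l ∈ G.dirPaths w v, walkWeight a l

theorem sum_walkWeight_eq_of_cons {P : Finset (List V)} {Q : V → Finset (List V)} {w : V}
    (hQ : ∀ u, ∀ l ∈ Q u, l.head? = some u)
    (hP : ∀ l, l ∈ P ↔ ∃ u, ∃ m ∈ Q u, w :: m = l) :
    ∑ l ∈ P, walkWeight a l = ∑ u, a w u * ∑ l ∈ Q u, walkWeight a l := by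
  classical
  have hPQ : P = Finset.univ.biUnion fun u => (Q u).image (cons w) := by
    ext l
    simp [hP]
  rw [hPQ, Finset.sum_biUnion]
  · refine Finset.sum_congr rfl fun u _ => ?_
    rw [Finset.sum_image (fun _ _ _ _ h => (cons.inj h).2), Finset.mul_sum]
    exact Finset.sum_congr rfl fun l hl => walkWeight_cons_of_head? a (hQ u l hl)
  · intro u _ v _ huv
    rw [Function.onFun, Finset.disjoint_left]
    intro l hl hl'
    obtain ⟨m, hm, rfl⟩ := Finset.mem_image.1 hl
    obtain ⟨m', hm', h⟩ := Finset.mem_image.1 hl'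
    obtain rfl := (cons.inj h).2
    exact huv (Option.some.inj ((hQ u _ hm).symm.trans (hQ v _ hm')))

theorem dirSum_eq_zero (hG : G.Acyclic) {w v : V} (h : ¬ ReflTransGen G.D w v) :
    G.dirSum a w v = 0 := by
  refine Finset.sum_eq_zero fun l hl => ?_
  rw [mem_dirPaths hG] at hl
  exact absurd (reflTransGen_getLast?_of_isChain hl.1 hl.2.2 (mem_of_mem_head? hl.2.1)) h

theorem dirSum_self (hG : G.Acyclic) (v : V) : G.dirSum a v v = 1 := by
  have : G.dirPaths v v = {[v]} := by
    ext l
    rw [mem_dirPaths hG, Finset.mem_singleton]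
    constructor
    · rintro ⟨h, hh, hl⟩
      exact eq_singleton_of_nodup (nodup_of_isChain_D hG h) hh hl
    · rintro rfl
      simp
  simp [dirSum, this, walkWeight]

theorem trekSum_self (v : V) : G.trekSum a v v = 1 := by
  have : G.treks v v = {[v]} := by
    ext l
    rw [mem_treks, Finset.mem_singleton]
    constructor
    · rintro ⟨h, hh, hl⟩
      exact eq_singleton_of_nodup h.1 hh hl
    · rintro rfl
      simp [isTrek_singleton]
  simp [trekSum, this, walkWeight]

theorem dirSum_eq_of_ne (hG : G.Acyclic) {w v : V} (hwv : w ≠ v) :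
    G.dirSum a w v = ∑ u, G.dirPart a w u * G.dirSum a u v := by
  classical
  have h := sum_walkWeight_eq_of_cons (a := a) (P := G.dirPaths w v)
    (Q := fun u => if G.D w u then G.dirPaths u v else ∅) (w := w) ?_ ?_
  · refine h.trans (Finset.sum_congr rfl fun u _ => ?_)
    by_cases hu : G.D w u <;> simp [dirPart, dirSum, hu]
  · intro u l hl
    split_ifs at hl
    · exact ((mem_dirPaths hG).1 hl).2.1
    · simp at hl
  · intro l
    constructor
    · intro hl
      obtain ⟨hc, hh, hl⟩ := (mem_dirPaths hG).1 hl
      match l with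
      | [] => simp at hh
      | [x] => exact absurd (by simp_all) hwv
      | x :: y :: l =>
        obtain rfl : x = w := by simpa using hh
        rw [getLast?_cons_cons] at hl
        refine ⟨y, y :: l, ?_, rfl⟩
        rw [isChain_cons_cons] at hc
        rw [if_pos hc.1, mem_dirPaths hG]
        exact ⟨hc.2, rfl, hl⟩
    · rintro ⟨u, m, hm, rfl⟩
      split_ifs at hm with hu
      · obtain ⟨hc, hh, hl⟩ := (mem_dirPaths hG).1 hm
        rw [mem_dirPaths hG]
        cases m with
        | nil => simp at hh
        | cons y m =>
          obtain rfl : y = u := by simpa using hh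
          exact ⟨isChain_cons_cons.2 ⟨hu, hc⟩, rfl, by rwa [getLast?_cons_cons]⟩
      · simp at hm

theorem trekSum_eq (hG : G.IsBAP) (ha : ∀ x y, a x y = a y x) {w v : V}
    (hwv : ¬ ReflTransGen G.D w v) :
    G.trekSum a w v = ∑ u, G.dirPart a u w * G.trekSum a u v +
      ∑ u, G.bidirPart a w u * G.dirSum a u v := by
  classical
  have h := sum_walkWeight_eq_of_cons (a := a) (P := G.treks w v)
    (Q := fun u => if G.D u w then G.treks u v else if G.B u w then G.dirPaths u v else ∅)
    (w := w) ?_ ?_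
  · rw [← Finset.sum_add_distrib]
    refine h.trans (Finset.sum_congr rfl fun u _ => ?_)
    have hBs : G.B u w ↔ G.B w u := ⟨G.symm _ _, G.symm _ _⟩
    by_cases hu : G.D u w
    · have hB : ¬ G.B w u := fun hB =>
        (hG.2 u w (hG.1.ne_of_D hu)).2.1 ⟨hu, G.symm _ _ hB⟩
      simp [dirPart, bidirPart, trekSum, hu, hB, ha u w]
    · by_cases hB : G.B w u <;> simp [dirPart, bidirPart, dirSum, hu, hBs, hB]
  · intro u l hl
    split_ifs at hl
    · exact (mem_treks.1 hl).2.1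
    · exact ((mem_dirPaths hG.1).1 hl).2.1
    · simp at hl
  · intro l
    constructor
    · intro hl
      obtain ⟨ht, hh, hl⟩ := mem_treks.1 hl
      match l with
      | [] => simp at hh
      | [x] =>
        have : w = v := by simp_all
        exact absurd (this ▸ .refl) hwv
      | x :: y :: l =>
        obtain rfl : x = w := by simpa using hh
        rw [getLast?_cons_cons] at hl
        refine ⟨y, y :: l, ?_, rfl⟩
        obtain ⟨hne, hD | hD | hB⟩ := (isChain_cons_cons.1 ht.2.1).1
        · exact absurd (.head hD (reflTransGen_getLast?_of_isChain (ht.isChain_D (.inl hD)) hl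
            mem_cons_self)) hwv
        · rw [if_pos hD, mem_treks]
          exact ⟨ht.tail, rfl, hl⟩
        · rw [if_neg fun hD => (hG.2 x y hne).2.2 ⟨hD, hB⟩, if_pos (G.symm _ _ hB),
            mem_dirPaths hG.1]
          exact ⟨ht.isChain_D (.inr hB), rfl, hl⟩
    · rintro ⟨u, m, hm, rfl⟩
      rw [mem_treks]
      split_ifs at hm with hD hB
      · obtain ⟨ht, hh, hl⟩ := mem_treks.1 hm
        refine ⟨ht.cons_of_D hG hh hl hwv hD, rfl, ?_⟩
        simp [getLast?_cons, hl]
      · obtain ⟨hc, hh, hl⟩ := (mem_dirPaths hG.1).1 hm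
        refine ⟨isTrek_cons_of_B hG hc hh hl hwv hB, rfl, ?_⟩
        simp [getLast?_cons, hl]
      · simp at hm

theorem trekSum_transpose (ha : ∀ x y, a x y = a y x) : (G.trekSum a)ᵀ = G.trekSum a := by
  ext w v
  refine Finset.sum_bij' (fun l _ => l.reverse) (fun l _ => l.reverse) ?_ ?_ ?_ ?_ ?_
  · intro l hl
    rw [mem_treks] at hl ⊢
    exact ⟨hl.1.reverse, by simpa using hl.2.2, by simpa using hl.2.1⟩
  · intro l hl
    rw [mem_treks] at hl ⊢
    exact ⟨hl.1.reverse, by simpa using hl.2.2, by simpa using hl.2.1⟩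
  · simp
  · simp
  · exact fun l _ => (walkWeight_reverse ha l).symm

theorem trekSum_congr {G' : MixedGraph V} (hskel : ∀ v w, G.adj v w ↔ G'.adj v w)
    (hcoll : ∀ u v w, G.ColliderTriple u v w ↔ G'.ColliderTriple u v w) :
    G.trekSum a = G'.trekSum a := by
  have hadj : G.adj = G'.adj := by
    ext v w
    exact hskel v w
  have htrek (w v : V) : G.treks w v = G'.treks w v := by
    ext l
    simp only [mem_treks, IsTrek, hadj, hcoll]
  ext w v
  simp [trekSum, htrek]

end Sums

section Model

variable {V : Type*} [Fintype V] [DecidableEq V] {G : MixedGraph V} {a : V → V → ℝ}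

theorem one_sub_dirPart_mul_dirSum (hG : G.Acyclic) :
    (1 - G.dirPart a) * G.dirSum a = 1 := by
  ext w v
  rw [sub_mul, one_mul, Matrix.sub_apply, Matrix.mul_apply]
  by_cases hwv : w = v
  · subst hwv
    rw [dirSum_self hG, Finset.sum_eq_zero, sub_zero, Matrix.one_apply_eq]
    intro u _
    by_cases hu : G.D w u
    · rw [dirSum_eq_zero hG fun huw => hG w (.head' hu huw), mul_zero]
    · simp [dirPart, hu]
  · rw [dirSum_eq_of_ne hG hwv, sub_self, Matrix.one_apply_ne hwv]

theorem dirSum_mul_one_sub_dirPart (hG : G.Acyclic) :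
    G.dirSum a * (1 - G.dirPart a) = 1 :=
  mul_eq_one_comm.1 (one_sub_dirPart_mul_dirSum hG)

/-- The trek sums satisfy the covariance equations of the graph off the diagonal. -/
theorem trekSum_residual (hG : G.IsBAP) (ha : ∀ x y, a x y = a y x) {w v : V} (h : w ≠ v) :
    ((1 - G.dirPart a)ᵀ * G.trekSum a * (1 - G.dirPart a) : Matrix V V ℝ) w v = G.bidirPart a w v := by
  have key {w v : V} (hwv : ¬ ReflTransGen G.D w v) :
      ((1 - G.dirPart a)ᵀ * G.trekSum a * (1 - G.dirPart a) : Matrix V V ℝ) w v = G.bidirPart a w v := by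
    have hx (x : V) (hx : ¬ ReflTransGen G.D w x) :
        ((1 - G.dirPart a)ᵀ * G.trekSum a : Matrix V V ℝ) w x = (G.bidirPart a * G.dirSum a) w x := by
      rw [transpose_sub, transpose_one, sub_mul, one_mul, Matrix.sub_apply, trekSum_eq hG ha hx]
      simp [Matrix.mul_apply]
    have hB : G.bidirPart a * G.dirSum a * (1 - G.dirPart a) = G.bidirPart a := by
      rw [mul_assoc, dirSum_mul_one_sub_dirPart hG.1, mul_one]
    rw [← hB, Matrix.mul_apply, Matrix.mul_apply]
    refine Finset.sum_congr rfl fun x _ => ?_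
    by_cases hwx : ReflTransGen G.D w x
    · have hne : x ≠ v := fun hxv => hwv (hxv ▸ hwx)
      have hD : ¬ G.D x v := fun hD => hwv (hwx.tail hD)
      simp [dirPart, hne, hD]
    · rw [hx x hwx]
  rcases not_reflTransGen_or hG.1 h with h | h
  · exact key h
  · have hsymm : ((1 - G.dirPart a)ᵀ * G.trekSum a * (1 - G.dirPart a))ᵀ =
        (1 - G.dirPart a)ᵀ * G.trekSum a * (1 - G.dirPart a) := by
      simp [transpose_mul, trekSum_transpose ha, mul_assoc]
    rw [← hsymm, transpose_apply, key h]
    have hB : G.B v w ↔ G.B w v := ⟨G.symm _ _, G.symm _ _⟩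
    simp only [bidirPart, of_apply, ha v w]
    split_ifs <;> tauto

/-- A matrix with zero diagonal whose residual is diagonal vanishes. -/
theorem eq_zero_of_residual (hG : G.Acyclic) {X : Matrix V V ℝ} (hX : ∀ v, X v v = 0)
    (h : ∀ w v, w ≠ v → ((1 - G.dirPart a)ᵀ * X * (1 - G.dirPart a) : Matrix V V ℝ) w v = 0) : X = 0 := by
  set Δ := (1 - G.dirPart a)ᵀ * X * (1 - G.dirPart a) with hΔ
  set T := G.dirSum a with hT
  have hXΔ : X = Tᵀ * Δ * T := by
    have h₁ : (1 - G.dirPart a) * T = 1 := one_sub_dirPart_mul_dirSum hG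
    have h₂ : Tᵀ * (1 - G.dirPart a)ᵀ = 1 := by rw [← transpose_mul, h₁, transpose_one]
    calc X = (Tᵀ * (1 - G.dirPart a)ᵀ) * X * ((1 - G.dirPart a) * T) := by
          rw [h₁, h₂, one_mul, mul_one]
      _ = Tᵀ * Δ * T := by simp only [hΔ, mul_assoc]
  have hwf : WellFounded (TransGen G.D) :=
    haveI : Std.Irrefl (TransGen G.D) := ⟨hG⟩
    Finite.wellFounded_of_trans_of_irrefl _
  have hdiag (v : V) : Δ v v = 0 := by
    induction v using hwf.induction with
    | _ v ih =>
      have hv := hX v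
      rw [hXΔ, Matrix.mul_apply, Finset.sum_eq_single v, Matrix.mul_apply,
        Finset.sum_eq_single v] at hv
      · simpa [hT, dirSum_self hG] using hv
      · intro u _ hu
        rw [h u v hu, mul_zero]
      · simp
      · intro u _ hu
        by_cases huv : ReflTransGen G.D u v
        · have huv' : TransGen G.D u v :=
            (reflTransGen_iff_eq_or_transGen.1 huv).resolve_left (Ne.symm hu)
          rw [Matrix.mul_apply, Finset.sum_eq_zero, zero_mul]
          intro x _
          by_cases hxu : x = u
          · rw [hxu, ih u huv', mul_zero]
          · rw [h x u hxu, mul_zero]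
        · rw [hT, dirSum_eq_zero hG huv, mul_zero]
      · simp
  have hΔ0 : Δ = 0 := by
    ext w v
    by_cases hwv : w = v
    · rw [hwv, hdiag, Matrix.zero_apply]
    · exact h w v hwv
  rw [hXΔ, hΔ0, mul_zero, zero_mul]

theorem LamCompat.isUnit_one_sub (hG : G.Acyclic) {Λ : Matrix V V ℝ} (h : G.LamCompat Λ) :
    IsUnit (1 - Λ) := by
  have := one_sub_dirPart_mul_dirSum (a := Λ) hG
  rw [h.dirPart_eq] at this
  exact IsUnit.of_mul_eq_one _ this

theorem mem_model_iff (hG : G.Acyclic) {S : Matrix V V ℝ} :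
    S ∈ G.model ↔ S.PosDef ∧ ∃ Λ, G.LamCompat Λ ∧
      ∀ v w, v ≠ w → ¬ G.B v w → ((1 - Λ)ᵀ * S * (1 - Λ) : Matrix V V ℝ) v w = 0 := by
  constructor
  · rintro ⟨Λ, Ω, hΛ, hΩ, rfl⟩
    have hU := hΛ.isUnit_one_sub hG
    have hdet := (Matrix.isUnit_iff_isUnit_det _).1 hU
    refine ⟨?_, Λ, hΛ, fun v w hvw hB => ?_⟩
    · rw [← conjTranspose_eq_transpose_of_trivial]
      exact hΩ.1.conjTranspose_mul_mul_same
        (mulVec_injective_of_isUnit ((Matrix.isUnit_nonsing_inv_iff).2 hU))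
    · have : (1 - Λ)ᵀ * (((1 - Λ)⁻¹)ᵀ * Ω * (1 - Λ)⁻¹) * (1 - Λ) = Ω := by
        have h₁ : (1 - Λ)⁻¹ * (1 - Λ) = 1 := nonsing_inv_mul _ hdet
        have h₂ : (1 - Λ)ᵀ * ((1 - Λ)⁻¹)ᵀ = 1 := by
          rw [← transpose_mul, h₁, transpose_one]
        rw [mul_assoc, mul_assoc, h₁, mul_one, ← mul_assoc, h₂, one_mul]
      rw [this]
      exact hΩ.2 v w hvw hB fun h => hB (G.symm _ _ h)
  · rintro ⟨hS, Λ, hΛ, h⟩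
    have hU := hΛ.isUnit_one_sub hG
    have hdet := (Matrix.isUnit_iff_isUnit_det _).1 hU
    refine ⟨Λ, (1 - Λ)ᵀ * S * (1 - Λ), hΛ, ⟨?_, fun v w hvw hB _ => h v w hvw hB⟩, ?_⟩
    · rw [← conjTranspose_eq_transpose_of_trivial]
      exact hS.conjTranspose_mul_mul_same (mulVec_injective_of_isUnit hU)
    · have h₁ : (1 - Λ) * (1 - Λ)⁻¹ = 1 := mul_nonsing_inv _ hdet
      have h₂ : ((1 - Λ)⁻¹)ᵀ * (1 - Λ)ᵀ = 1 := by
        rw [← transpose_mul, h₁, transpose_one]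
      rw [mul_assoc, mul_assoc, h₁, mul_one, ← mul_assoc, h₂, one_mul]

/-- The model is stable under rescaling the coordinates. -/
theorem diagonal_mul_mul_diagonal_mem_model (hG : G.Acyclic) {S : Matrix V V ℝ}
    (hS : S ∈ G.model) {e : V → ℝ} (he : ∀ v, e v ≠ 0) :
    diagonal e * S * diagonal e ∈ G.model := by
  rw [mem_model_iff hG] at hS ⊢
  obtain ⟨hS, Λ, hΛ, h⟩ := hS
  have hU : IsUnit (diagonal e) := by
    rw [Matrix.isUnit_iff_isUnit_det, det_diagonal, isUnit_iff_ne_zero]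
    exact Finset.prod_ne_zero_iff.2 fun v _ => he v
  refine ⟨?_, of fun v w => (e v)⁻¹ * Λ v w * e w, fun v w hD => by simp [hΛ v w hD], ?_⟩
  · have := hS.conjTranspose_mul_mul_same (mulVec_injective_of_isUnit hU)
    rwa [diagonal_conjTranspose, star_trivial] at this
  · intro v w hvw hB
    have h₁ : diagonal e * (1 - of fun v w => (e v)⁻¹ * Λ v w * e w) =
        (1 - Λ) * diagonal e := by
      ext x y
      by_cases hxy : x = y
      · subst hxy
        simp [mul_sub, sub_mul, mul_assoc, he x]
      · simp [hxy, mul_assoc, he x]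
    have h₂ := congrArg transpose h₁
    rw [transpose_mul, transpose_mul, diagonal_transpose] at h₂
    calc _ = (((1 - of fun v w => (e v)⁻¹ * Λ v w * e w)ᵀ * diagonal e) * S *
          (diagonal e * (1 - of fun v w => (e v)⁻¹ * Λ v w * e w)) : Matrix V V ℝ) v w := by
          simp only [mul_assoc]
      _ = (diagonal e * ((1 - Λ)ᵀ * S * (1 - Λ)) * diagonal e : Matrix V V ℝ) v w := by
          rw [h₁, h₂]
          simp only [mul_assoc]
      _ = 0 := by
          rw [mul_diagonal, diagonal_mul, h v w hvw hB, mul_zero, zero_mul]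

/-- Wright's formula: a matrix of the model with unit diagonal is a matrix of trek sums. -/
theorem exists_eq_trekSum (hG : G.IsBAP) {S : Matrix V V ℝ} (hS : S ∈ G.model)
    (hdiag : ∀ v, S v v = 1) :
    ∃ a : V → V → ℝ, (∀ x y, a x y = a y x) ∧ S = G.trekSum a := by
  classical
  obtain ⟨hpos, Λ, hΛ, h⟩ := (mem_model_iff hG.1).1 hS
  set Ω := (1 - Λ)ᵀ * S * (1 - Λ) with hΩ
  have hSt : Sᵀ = S := by
    simpa [conjTranspose_eq_transpose_of_trivial] using hpos.isHermitian.eq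
  have hΩt (x y : V) : Ω x y = Ω y x := by
    have : Ωᵀ = Ω := by simp [hΩ, transpose_mul, hSt, mul_assoc]
    rw [← this, transpose_apply, this]
  let a : V → V → ℝ := fun x y => Λ x y + Λ y x + if G.B x y then Ω x y else 0
  have hBs (x y : V) : G.B x y ↔ G.B y x := ⟨G.symm _ _, G.symm _ _⟩
  have ha (x y : V) : a x y = a y x := by
    simp only [a, hBs x y, hΩt x y, add_comm (Λ x y)]
  have haD : G.dirPart a = Λ := by
    ext x y
    by_cases hD : G.D x y
    · have hs := hG.2 x y (hG.1.ne_of_D hD)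
      have hB : ¬ G.B x y := fun hB => hs.2.1 ⟨hD, hB⟩
      simp [dirPart, a, hD, hB, hΛ y x fun hD' => hs.1 ⟨hD, hD'⟩]
    · simp [dirPart, hD, hΛ x y hD]
  have haB {x y : V} (hxy : x ≠ y) : G.bidirPart a x y = Ω x y := by
    by_cases hB : G.B x y
    · have hs := hG.2 x y hxy
      simp [bidirPart, a, hB, hΛ x y fun hD => hs.2.1 ⟨hD, hB⟩,
        hΛ y x fun hD => hs.2.2 ⟨hD, hB⟩]
    · simp [bidirPart, hB, h x y hxy hB]
  refine ⟨a, ha, sub_eq_zero.1 (eq_zero_of_residual (a := a) hG.1 (fun v => ?_) ?_)⟩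
  · rw [Matrix.sub_apply, hdiag, trekSum_self, sub_self]
  · intro w v hwv
    rw [mul_sub (1 - G.dirPart a)ᵀ, sub_mul, Matrix.sub_apply, trekSum_residual hG ha hwv, haD, ← hΩ, haB hwv,
      sub_self]

theorem trekSum_mem_model (hG : G.IsBAP) (ha : ∀ x y, a x y = a y x)
    (hpos : (G.trekSum a).PosDef) : G.trekSum a ∈ G.model := by
  refine (mem_model_iff hG.1).2 ⟨hpos, G.dirPart a, fun v w hD => by simp [dirPart, hD], ?_⟩
  intro v w hvw hB
  rw [trekSum_residual hG ha hvw]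
  simp [bidirPart, hB]

/-- The model depends only on the skeleton and the collider triples. -/
theorem model_subset {G' : MixedGraph V} (hG : G.IsBAP) (hG' : G'.IsBAP)
    (hskel : ∀ v w, G.adj v w ↔ G'.adj v w)
    (hcoll : ∀ u v w, G.ColliderTriple u v w ↔ G'.ColliderTriple u v w) :
    G.model ⊆ G'.model := by
  intro S hS
  have hpos (v : V) : 0 < S v v := ((mem_model_iff hG.1).1 hS).1.diag_pos
  let d : V → ℝ := fun v => √(S v v)
  have hd (v : V) : d v ≠ 0 := (Real.sqrt_pos.2 (hpos v)).ne'
  have hdd (v : V) : d v * d v = S v v := Real.mul_self_sqrt (hpos v).le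
  have hT := diagonal_mul_mul_diagonal_mem_model hG.1 hS (e := fun v => (d v)⁻¹)
    fun v => inv_ne_zero (hd v)
  have hTpos := ((mem_model_iff hG.1).1 hT).1
  obtain ⟨a, ha, hTa⟩ := exists_eq_trekSum hG hT fun v => by
    rw [mul_diagonal, diagonal_mul, ← hdd v]
    field_simp [hd v]
  rw [hTa, trekSum_congr hskel hcoll] at hTpos
  have hT' := trekSum_mem_model hG' ha hTpos
  rw [← trekSum_congr hskel hcoll, ← hTa] at hT'
  convert diagonal_mul_mul_diagonal_mem_model hG'.1 hT' hd using 1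
  ext v w
  simp only [mul_diagonal, diagonal_mul]
  field_simp [hd v, hd w]

end Model

end MixedGraph

/-- Theorem 6: If two BAPs have the same skeleton and the same
collider triples, they are algebraically equivalent. -/
theorem algModel_eq_of_skeleton_and_colliderTriples_eq
    {V : Type*} [Fintype V] [DecidableEq V]
    (G G' : MixedGraph V) (hG : G.IsBAP) (hG' : G'.IsBAP)
    (hskel : ∀ v w, G.adj v w ↔ G'.adj v w)
    (hcoll : ∀ u v w, G.ColliderTriple u v w ↔ G'.ColliderTriple u v w) :
    G.algModel = G'.algModel := by
  have hmodel : G.model = G'.model :=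
    (MixedGraph.model_subset hG hG' hskel hcoll).antisymm
      (MixedGraph.model_subset hG' hG (fun v w => (hskel v w).symm)
        fun u v w => (hcoll u v w).symm)
  simp only [MixedGraph.algModel, hmodel]
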